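/- arXiv:1708.06718 — 4 statements merged into one kernel-verified Lean document; each statement's English description precedes it below -/
import Mathlib

section
/- For every integer m ≥ 5 there exists a 4-regular simple graph G on n = (6m − 12) · 2^m vertices whose edge expansion is at least 1/(12(m − 2)); that is, every nonempty set S of vertices with 2|S| ≤ n satisfies 12(m − 2) · |δ(S)| ≥ |S|. -/
/-- The edge boundary `δ(S)` of a vertex set `S`: the set of edges of `G` with
exactly one endpoint in `S`. -/
def edgeBoundary {V : Type*} (G : SimpleGraph V) (S : Set V) : Set (Sym2 V) :=
  {e ∈ G.edgeSet | ∃ a ∈ S, ∃ b ∉ S, e = s(a, b)}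

/-- The number of elements of `S` which `g` moves out of `S`. -/
noncomputable def leaveCount {V : Type} [Fintype V] (S : Set V) (g : Equiv.Perm V) : ℕ :=
  {x : V | x ∈ S ∧ g x ∉ S}.ncard

theorem leaveCount_mul {V : Type} [Fintype V] (S : Set V) (g h : Equiv.Perm V) :
    leaveCount S (g * h) ≤ leaveCount S g + leaveCount S h := by
  unfold leaveCount
  have h1 : {x : V | x ∈ S ∧ (g * h) x ∉ S} ⊆
      (h ⁻¹' {x : V | x ∈ S ∧ g x ∉ S}) ∪ {x : V | x ∈ S ∧ h x ∉ S} := by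
    intro x hx
    simp only [Set.mem_ofPred_eq, Equiv.Perm.mul_apply] at hx
    by_cases hh : h x ∈ S
    · left; exact ⟨hh, hx.2⟩
    · right; exact ⟨hx.1, hh⟩
  have h2 : (h ⁻¹' {x : V | x ∈ S ∧ g x ∉ S}).ncard = {x : V | x ∈ S ∧ g x ∉ S}.ncard :=
    Set.ncard_preimage_of_injective_subset_range h.injective
      (by rw [h.surjective.range_eq]; exact Set.subset_univ _)
  calc _ ≤ _ := Set.ncard_le_ncard h1 (Set.toFinite _)
    _ ≤ _ := Set.ncard_union_le _ _
    _ = _ := by rw [h2]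

theorem leaveCount_pow {V : Type} [Fintype V] (S : Set V) (g : Equiv.Perm V) (t : ℕ) :
    leaveCount S (g ^ t) ≤ t * leaveCount S g := by
  induction t with
  | zero => simp [leaveCount]
  | succ t ih =>
    rw [pow_succ]
    have := leaveCount_mul S (g ^ t) g
    linarith [Nat.succ_mul t (leaveCount S g)]

theorem two_mul_leaveCount_le {V : Type} [Fintype V] (G : SimpleGraph V) (S : Set V)
    (g : Equiv.Perm V) (hg : ∀ x, G.Adj x (g x)) (hgg : ∀ x, g (g x) ≠ x) :
    2 * leaveCount S g ≤ (edgeBoundary G S).ncard := by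
  set A : Set V := {x : V | x ∈ S ∧ g x ∉ S} with hA
  set B : Set V := {x : V | x ∉ S ∧ g x ∈ S} with hB
  have hp : (g ⁻¹' S).ncard = S.ncard :=
    Set.ncard_preimage_of_injective_subset_range g.injective
      (by rw [g.surjective.range_eq]; exact Set.subset_univ _)
  have e1 : A = S \ (g ⁻¹' S) := by ext x; simp [hA]
  have e2 : B = (g ⁻¹' S) \ S := by ext x; simp [hB, and_comm]
  have hAB : A.ncard = B.ncard := by
    have i1 := Set.ncard_sdiff_add_ncard S (g ⁻¹' S) (Set.toFinite _) (Set.toFinite _)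
    have i2 := Set.ncard_sdiff_add_ncard (g ⁻¹' S) S (Set.toFinite _) (Set.toFinite _)
    rw [← e1] at i1
    rw [← e2, Set.union_comm] at i2
    omega
  have hd : Disjoint A B := by
    rw [Set.disjoint_left]
    intro x hx hx'
    exact hx'.1 hx.1
  have hU : (A ∪ B).ncard = 2 * leaveCount S g := by
    rw [Set.ncard_union_eq hd (Set.toFinite _) (Set.toFinite _), ← hAB]
    exact (two_mul _).symm
  rw [← hU]
  refine Set.ncard_le_ncard_of_injOn (fun x => s(x, g x)) ?_ ?_ (Set.toFinite _)
  · rintro x (hx | hx)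
    · exact ⟨hg x, x, hx.1, g x, hx.2, rfl⟩
    · exact ⟨hg x, g x, hx.2, x, hx.1, Sym2.eq_swap⟩
  · intro x _ y _ hxy
    simp only [Sym2.eq_iff] at hxy
    rcases hxy with h | h
    · exact h.1
    · exfalso
      apply hgg x
      rw [h.2, ← h.1]

theorem sum_leaveCount {V : Type} [Fintype V] [AddGroup V] (S : Set V) :
    ∑ t : V, leaveCount S (Equiv.addRight t) = S.ncard * (Sᶜ).ncard := by
  classical
  have h1 : ∀ t : V, leaveCount S (Equiv.addRight t)
      = ∑ x : V, if x ∈ S ∧ x + t ∉ S then 1 else 0 := by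
    intro t
    unfold leaveCount
    rw [Finset.sum_boole, Nat.cast_id, ← Set.ncard_coe_finset]
    congr 1
    ext; simp
  have h2 : ∀ x : V, ∑ t : V, (if x ∈ S ∧ x + t ∉ S then 1 else 0)
      = if x ∈ S then (Sᶜ).ncard else 0 := by
    intro x
    by_cases hx : x ∈ S
    · simp only [hx, true_and, if_true]
      refine (Equiv.sum_comp (Equiv.addLeft x) (fun y => if y ∉ S then 1 else 0)).trans ?_
      rw [Set.ncard_eq_toFinset_card', Finset.sum_boole, Nat.cast_id]
      congr 1
      ext; simp
    · simp [hx]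
  simp_rw [h1]
  rw [Finset.sum_comm]
  simp_rw [h2]
  rw [← Finset.sum_filter, Finset.sum_const, smul_eq_mul, Set.ncard_eq_toFinset_card' S]
  congr 2
  ext; simp

/-- The averaging argument. -/
theorem expansion_of_leaveCount {V : Type} [Fintype V] [AddGroup V] (S : Set V) (C : ℕ)
    (hS : 2 * S.ncard ≤ Fintype.card V)
    (h : ∀ t : V, 2 * leaveCount S (Equiv.addRight t) ≤ C) : S.ncard ≤ C := by
  have h1 := sum_leaveCount S
  have h2 : ∑ t : V, 2 * leaveCount S (Equiv.addRight t) ≤ ∑ _t : V, C :=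
    Finset.sum_le_sum fun t _ => h t
  rw [← Finset.mul_sum, h1, Finset.sum_const, smul_eq_mul, Finset.card_univ] at h2
  have h3 := Set.ncard_add_ncard_compl S (Set.toFinite _) (Set.toFinite _)
  rw [Nat.card_eq_fintype_card] at h3
  have h4 : 0 < Fintype.card V := Fintype.card_pos
  have h5 : Fintype.card V ≤ 2 * (Sᶜ).ncard := by omega
  refine le_of_mul_le_mul_left ?_ h4
  nlinarith [Nat.mul_le_mul_left S.ncard h5]

/-- Labels of the cross edges. -/
def crossVec (k m : ℕ) (l : ZMod k) : Fin m → ZMod 2 :=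
  if l.val < m then (fun i => if l.val = i.val then 1 else 0) else 1

/-- The part of `u` to be written at level `l`. -/
def partVec (k m : ℕ) (u : Fin m → ZMod 2) (l : ZMod k) : Fin m → ZMod 2 :=
  fun i => if l.val = i.val then u i else 0

theorem crossVec_ne_zero (k m : ℕ) (hm : 0 < m) (l : ZMod k) : crossVec k m l ≠ 0 := by
  unfold crossVec
  split_ifs with h
  · intro h0
    have := congrFun h0 ⟨l.val, h⟩
    simp at this
  · intro h0
    have := congrFun h0 ⟨0, hm⟩
    simp at this

theorem partVec_eq (k m : ℕ) (u : Fin m → ZMod 2) (l : ZMod k) :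
    partVec k m u l = 0 ∨ partVec k m u l = crossVec k m l := by
  unfold partVec crossVec
  by_cases h : l.val < m
  · have h01 : ∀ a : ZMod 2, a = 0 ∨ a = 1 := by decide
    rcases h01 (u ⟨l.val, h⟩) with h0 | h0
    · left
      funext i
      simp only [Pi.zero_apply, ite_eq_right_iff]
      intro hi
      rw [← h0]; congr 1; exact Fin.ext hi.symm
    · right
      rw [if_pos h]
      funext i
      by_cases hi : l.val = i.val
      · simp only [hi, if_true]
        rw [← h0]; congr 1; exact Fin.ext hi.symm
      · simp [hi]
  · left
    funext i
    have : l.val ≠ i.val := by omega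
    simp [this]

theorem sum_partVec (k m : ℕ) [NeZero k] (hmk : m ≤ k) (u : Fin m → ZMod 2) :
    ∑ l : ZMod k, partVec k m u l = u := by
  funext i
  rw [Finset.sum_apply]
  unfold partVec
  have hi : i.val < k := lt_of_lt_of_le i.2 hmk
  rw [Finset.sum_eq_single (i.val : ZMod k)]
  · simp [ZMod.val_natCast_of_lt hi]
  · intro b _ hb
    rw [if_neg]
    intro h
    apply hb
    rw [← h, ZMod.natCast_zmod_val]
  · simp

theorem sum_range_zmod {M : Type*} [AddCommMonoid M] (k : ℕ) [NeZero k] (F : ZMod k → M)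
    (l : ZMod k) : ∑ s ∈ Finset.range k, F (l + s) = ∑ x : ZMod k, F x := by
  rw [← Equiv.sum_comp (Equiv.addLeft l) F]
  refine Finset.sum_bij (fun s _ => (s : ZMod k)) ?_ ?_ ?_ ?_
  · simp
  · intro a ha b hb hab
    rw [Finset.mem_range] at ha hb
    have := congrArg ZMod.val hab
    rwa [ZMod.val_natCast_of_lt ha, ZMod.val_natCast_of_lt hb] at this
  · intro b _
    exact ⟨b.val, Finset.mem_range.2 (ZMod.val_lt b), ZMod.natCast_zmod_val b⟩
  · intro a _; rfl

/-- One step up, writing `u` at the current level. -/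
def stepPerm (k m : ℕ) (u : Fin m → ZMod 2) : Equiv.Perm (ZMod k × (Fin m → ZMod 2)) where
  toFun x := (x.1 + 1, x.2 + partVec k m u x.1)
  invFun x := (x.1 - 1, x.2 - partVec k m u (x.1 - 1))
  left_inv x := by ext <;> simp
  right_inv x := by ext <;> simp

theorem stepPerm_pow (k m : ℕ) (u : Fin m → ZMod 2) (t : ℕ) (x : ZMod k × (Fin m → ZMod 2)) :
    (stepPerm k m u ^ t) x =
      (x.1 + t, x.2 + ∑ s ∈ Finset.range t, partVec k m u (x.1 + s)) := by
  induction t with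
  | zero => simp
  | succ t ih =>
    rw [pow_succ', Equiv.Perm.mul_apply, ih, Finset.sum_range_succ]
    simp [stepPerm, add_assoc]

theorem partVec_zero (k m : ℕ) (l : ZMod k) : partVec k m 0 l = 0 := by
  funext i; simp [partVec]

theorem addRight_eq (k m : ℕ) [NeZero k] (hmk : m ≤ k) (t : ZMod k × (Fin m → ZMod 2)) :
    Equiv.addRight t = stepPerm k m 0 ^ (t.1.val) * stepPerm k m t.2 ^ k := by
  ext1 x
  rw [Equiv.Perm.mul_apply, stepPerm_pow, stepPerm_pow, sum_range_zmod k (partVec k m t.2),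
    sum_partVec k m hmk]
  simp [partVec_zero, Prod.ext_iff]

/-- The upward relation. -/
def upRel (k m : ℕ) (x y : ZMod k × (Fin m → ZMod 2)) : Prop :=
  y.1 = x.1 + 1 ∧ (y.2 = x.2 ∨ y.2 = x.2 + crossVec k m x.1)

/-- The wrapped butterfly-like graph. -/
def bflyGraph (k m : ℕ) (hk : 3 ≤ k) : SimpleGraph (ZMod k × (Fin m → ZMod 2)) where
  Adj x y := upRel k m x y ∨ upRel k m y x
  symm := ⟨fun _ _ h => h.symm⟩
  loopless := ⟨by
    intro x h
    have : Fact (1 < k) := ⟨by omega⟩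
    have h1 : x.1 = x.1 + 1 := by rcases h with h | h <;> exact h.1
    simp at h1⟩

theorem two_ne_zero_zmod (k : ℕ) (hk : 3 ≤ k) : (1 : ZMod k) + 1 ≠ 0 := by
  intro h
  have h2 : ((2 : ℕ) : ZMod k) = 0 := by push_cast; rw [← h]; norm_num
  rw [ZMod.natCast_eq_zero_iff] at h2
  have := Nat.le_of_dvd (by norm_num) h2
  omega

theorem bfly_regular (k m : ℕ) (hk : 3 ≤ k) (hm : 0 < m) (x : ZMod k × (Fin m → ZMod 2)) :
    Nat.card ((bflyGraph k m hk).neighborSet x) = 4 := by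
  classical
  obtain ⟨l, v⟩ := x
  have hset : (bflyGraph k m hk).neighborSet (l, v) =
      (({(l + 1, v), (l + 1, v + crossVec k m l), (l - 1, v), (l - 1, v - crossVec k m (l - 1))} :
        Finset (ZMod k × (Fin m → ZMod 2))) : Set (ZMod k × (Fin m → ZMod 2))) := by
    ext ⟨l', v'⟩
    simp only [SimpleGraph.mem_neighborSet, bflyGraph, upRel, Finset.coe_insert,
      Finset.coe_singleton, Set.mem_insert_iff, Set.mem_singleton_iff, Prod.mk.injEq]
    constructor
    · rintro (⟨h1, h2 | h2⟩ | ⟨h1, h2 | h2⟩)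
      · exact Or.inl ⟨h1, h2⟩
      · exact Or.inr (Or.inl ⟨h1, h2⟩)
      · exact Or.inr (Or.inr (Or.inl ⟨by rw [h1]; simp, h2.symm⟩))
      · refine Or.inr (Or.inr (Or.inr ⟨by rw [h1]; simp, ?_⟩))
        rw [h2, h1]; simp
    · rintro (⟨h1, h2⟩ | ⟨h1, h2⟩ | ⟨h1, h2⟩ | ⟨h1, h2⟩)
      · exact Or.inl ⟨h1, Or.inl h2⟩
      · exact Or.inl ⟨h1, Or.inr h2⟩
      · exact Or.inr ⟨by rw [h1]; simp, Or.inl h2.symm⟩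
      · exact Or.inr ⟨by rw [h1]; simp, Or.inr (by rw [h2, h1]; simp)⟩
  rw [hset]
  have hne : l + 1 ≠ l - 1 := by
    intro h
    apply two_ne_zero_zmod k hk
    have := congrArg (fun z => z - l + 1) h
    simpa using this
  have c1 := crossVec_ne_zero k m hm l
  have c2 := crossVec_ne_zero k m hm (l - 1)
  rw [Nat.card_coe_set_eq, Set.ncard_coe_finset]
  rw [Finset.card_insert_of_notMem, Finset.card_insert_of_notMem, Finset.card_insert_of_notMem,
    Finset.card_singleton]
  · simp only [Finset.mem_singleton, Prod.mk.injEq, true_and]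
    intro h
    exact c2 (sub_eq_self.1 h.symm)
  · simp [hne]
  · simp [hne, c1]

theorem bfly_expansion (k m : ℕ) [NeZero k] (hk : 3 ≤ k) (hmk : m ≤ k)
    (S : Set (ZMod k × (Fin m → ZMod 2)))
    (hS : 2 * S.ncard ≤ Fintype.card (ZMod k × (Fin m → ZMod 2))) :
    S.ncard ≤ 2 * k * (edgeBoundary (bflyGraph k m hk) S).ncard := by
  apply expansion_of_leaveCount S _ hS
  intro t
  have key : ∀ u, 2 * leaveCount S (stepPerm k m u) ≤
      (edgeBoundary (bflyGraph k m hk) S).ncard := by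
    intro u
    apply two_mul_leaveCount_le
    · intro x
      left
      refine ⟨rfl, ?_⟩
      rcases partVec_eq k m u x.1 with h | h
      · left; simp [stepPerm, h]
      · right; simp [stepPerm, h]
    · intro x h
      have := congrArg Prod.fst h
      simp only [stepPerm, Equiv.coe_fn_mk, add_assoc, add_eq_left] at this
      exact two_ne_zero_zmod k hk this
  rw [addRight_eq k m hmk t]
  have h1 := leaveCount_mul S (stepPerm k m 0 ^ (t.1.val)) (stepPerm k m t.2 ^ k)
  have h2 := leaveCount_pow S (stepPerm k m 0) t.1.val
  have h3 := leaveCount_pow S (stepPerm k m t.2) k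
  have h4 : t.1.val * leaveCount S (stepPerm k m 0) ≤ k * leaveCount S (stepPerm k m 0) :=
    Nat.mul_le_mul_right _ (ZMod.val_lt t.1).le
  have h5 := Nat.mul_le_mul_left k (key 0)
  have h6 := Nat.mul_le_mul_left k (key t.2)
  nlinarith

/-- For every `m ≥ 5` there is a `4`-regular simple graph on
`n = (6m − 12)·2^m` vertices whose edge expansion is at least `1/(12(m−2))`:
every nonempty vertex set `S` with `2|S| ≤ n` satisfies
`12(m−2)·|δ(S)| ≥ |S|`. -/
theorem exists_four_regular_graph_with_expansion (m : ℕ) (hm : 5 ≤ m) :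
    ∃ (V : Type) (G : SimpleGraph V), Finite V ∧
      Nat.card V = (6 * m - 12) * 2 ^ m ∧
      (∀ v : V, Nat.card (G.neighborSet v) = 4) ∧
      ∀ S : Set V, S.Nonempty → 2 * S.ncard ≤ (6 * m - 12) * 2 ^ m →
        S.ncard ≤ 12 * (m - 2) * (edgeBoundary G S).ncard := by
  have hk : 3 ≤ 6 * m - 12 := by omega
  have : NeZero (6 * m - 12) := ⟨by omega⟩
  have hcard : Fintype.card (ZMod (6 * m - 12) × (Fin m → ZMod 2)) = (6 * m - 12) * 2 ^ m := by
    simp [ZMod.card]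
  refine ⟨ZMod (6 * m - 12) × (Fin m → ZMod 2), bflyGraph (6 * m - 12) m hk, inferInstance,
    by rw [Nat.card_eq_fintype_card, hcard], bfly_regular _ m hk (by omega), ?_⟩
  intro S _ hS
  have h := bfly_expansion (6 * m - 12) m hk (by omega) S (by rw [hcard]; exact hS)
  have e : 2 * (6 * m - 12) = 12 * (m - 2) := by omega
  rwa [e] at h
end

section
/- For every integer m ≥ 5 and every real constant 0 < c < 1/2, there exists a 4-regular simple graph G on n = (6m − 12) · 2^m vertices such that every separator (A, B, C) of G with separation constant c satisfies 48(m − 2) · |C| ≥ c · n. -/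
namespace SepAux

/-- `N A π` is the set of elements of `A` sent out of `A` by `π`. -/
def N {V : Type} (A : Set V) (π : V → V) : Set V := {a ∈ A | π a ∉ A}

theorem N_step {V : Type} [Finite V] (A C : Set V) (ρ π : V → V)
    (hρ : Function.Injective ρ) (hπ : Function.Injective π)
    (h : ∀ a ∈ A, ρ a ∈ A ∨ ρ a ∈ C) :
    (N A (ρ ∘ π)).ncard ≤ (N A π).ncard + C.ncard := by
  have hsub : N A (ρ ∘ π) ⊆ N A π ∪ (ρ ∘ π) ⁻¹' C := by
    rintro a ⟨ha, ha2⟩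
    by_cases hp : π a ∈ A
    · right
      rcases h _ hp with h1 | h1
      · exact absurd h1 ha2
      · exact h1
    · left
      exact ⟨ha, hp⟩
  have hC : ((ρ ∘ π) ⁻¹' C).ncard ≤ C.ncard := by
    apply Set.ncard_le_ncard_of_injOn (ρ ∘ π) (fun a ha => ha) ((hρ.comp hπ).injOn) (Set.toFinite _)
  calc _ ≤ _ := Set.ncard_le_ncard hsub (Set.toFinite _)
    _ ≤ _ := Set.ncard_union_le _ _
    _ ≤ _ := by omega

theorem sum_N {V : Type} [Fintype V] [AddCommGroup V] (A : Set V) :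
    ∑ p : V, (N A (fun a => a + p)).ncard = A.ncard * (Aᶜ).ncard := by
  classical
  have h1 : ∀ p : V, (N A (fun a => a + p)).ncard
      = ∑ a : V, if a ∈ A ∧ a + p ∉ A then 1 else 0 := by
    intro p
    rw [Finset.sum_boole, Set.ncard_eq_toFinset_card']
    simp only [Nat.cast_id]
    congr 1
    ext a
    rw [Set.mem_toFinset]
    simp [N]
  simp_rw [h1]
  rw [Finset.sum_comm]
  have h2 : ∀ a : V, (∑ p : V, if a ∈ A ∧ a + p ∉ A then 1 else 0)
      = if a ∈ A then (Aᶜ).ncard else 0 := by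
    intro a
    by_cases ha : a ∈ A
    · simp only [ha, true_and, if_true]
      rw [Fintype.sum_equiv (Equiv.addLeft a) (fun p => if a + p ∉ A then 1 else 0)
        (fun q => if q ∉ A then 1 else 0) (fun p => by rw [Equiv.coe_addLeft])]
      rw [Finset.sum_boole, Set.ncard_eq_toFinset_card']
      simp only [Nat.cast_id]
      congr 1
      ext a
      simp
    · simp [ha]
  simp_rw [h2]
  rw [← Finset.sum_filter, Finset.sum_const, smul_eq_mul]
  congr 1
  rw [Set.ncard_eq_toFinset_card']
  congr 1
  ext a
  simp

section
variable (m k : ℕ)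

/-- Vertices. -/
abbrev W : Type := (Fin m → ZMod 2) × ZMod k

/-- First flipped coordinate. -/
def f (hm : 5 ≤ m) (i : ZMod k) : Fin m := if h : i.val < m then ⟨i.val, h⟩ else ⟨0, by omega⟩

/-- Second flipped coordinate. -/
def g (hm : 5 ≤ m) (i : ZMod k) : Fin m :=
  if f m k hm i = ⟨0, by omega⟩ then ⟨1, by omega⟩ else ⟨0, by omega⟩

theorem g_ne_f (hm : 5 ≤ m) (i : ZMod k) : g m k hm i ≠ f m k hm i := by
  unfold g
  split_ifs with h
  · rw [h]; simp
  · exact fun h' => h h'.symm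

/-- Unit vector. -/
def e (j : Fin m) : Fin m → ZMod 2 := Pi.single j 1

theorem e_add (j : Fin m) : e m j + e m j = 0 := by
  unfold e
  rw [← Pi.single_add]
  have : (1 + 1 : ZMod 2) = 0 := by decide
  rw [this, Pi.single_zero]

theorem e_ne (j : Fin m) : e m j ≠ 0 := by
  simp [e]

theorem e_inj {i j : Fin m} (h : e m i = e m j) : i = j := by
  have := congrFun h i
  by_contra hij
  simp [e, Pi.single_apply, hij] at this

/-- The graph. -/
def G (hm : 5 ≤ m) (h18 : 18 ≤ k) : SimpleGraph (W m k) where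
  Adj u v := (u.1 = v.1 ∧ (v.2 = u.2 + 1 ∨ u.2 = v.2 + 1)) ∨
    (u.2 = v.2 ∧ (v.1 = u.1 + e m (f m k hm u.2) ∨ v.1 = u.1 + e m (g m k hm u.2)))
  symm := ⟨by
    rintro ⟨x, i⟩ ⟨y, j⟩ h
    dsimp only at *
    rcases h with ⟨h1, h2⟩ | ⟨h1, h2⟩
    · exact Or.inl ⟨h1.symm, h2.symm⟩
    · subst h1
      right
      refine ⟨rfl, ?_⟩
      rcases h2 with h2 | h2
      · left; rw [h2, add_assoc, e_add, add_zero]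
      · right; rw [h2, add_assoc, e_add, add_zero]⟩
  loopless := ⟨by
    rintro ⟨x, i⟩ h
    dsimp only at h
    haveI : Fact (1 < k) := ⟨by omega⟩
    rcases h with ⟨h1, h2 | h2⟩ | ⟨h1, h2 | h2⟩
    · exact one_ne_zero (left_eq_add.mp h2)
    · exact one_ne_zero (left_eq_add.mp h2)
    · exact e_ne _ _ (left_eq_add.mp h2)
    · exact e_ne _ _ (left_eq_add.mp h2)⟩

theorem deg (hm : 5 ≤ m) (h18 : 18 ≤ k) (v : W m k) :
    Nat.card ((G m k hm h18).neighborSet v) = 4 := by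
  classical
  obtain ⟨x, i⟩ := v
  haveI : Fact (1 < k) := ⟨by omega⟩
  have h2 : (2 : ZMod k) ≠ 0 := by
    intro h
    have h' : ((2 : ℕ) : ZMod k) = 0 := by exact_mod_cast h
    rw [ZMod.natCast_eq_zero_iff] at h'
    have := Nat.le_of_dvd (by norm_num) h'
    omega
  have hs : (G m k hm h18).neighborSet (x, i) =
      (({(x, i + 1), (x, i - 1), (x + e m (f m k hm i), i), (x + e m (g m k hm i), i)} :
        Finset (W m k)) : Set (W m k)) := by
    ext ⟨y, j⟩
    simp only [SimpleGraph.mem_neighborSet, G, Finset.coe_insert, Finset.coe_singleton,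
      Set.mem_insert_iff, Set.mem_singleton_iff, Prod.mk.injEq, eq_sub_iff_add_eq]
    constructor
    · rintro (⟨h1, h2 | h2⟩ | ⟨h1, h2 | h2⟩) <;> simp [h1, h2]
    · rintro (⟨h1, h2⟩ | ⟨h1, h2⟩ | ⟨h1, h2⟩ | ⟨h1, h2⟩) <;> simp [h1, h2]
  rw [hs, Nat.card_coe_set_eq, Set.ncard_coe_finset]
  have h11 : (i + 1 : ZMod k) ≠ i - 1 := by
    intro h
    apply h2
    linear_combination h
  have hfg : e m (f m k hm i) ≠ e m (g m k hm i) := fun h => g_ne_f m k hm i (e_inj m h).symm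
  rw [Finset.card_insert_of_notMem, Finset.card_insert_of_notMem, Finset.card_insert_of_notMem,
    Finset.card_singleton]
  · simpa using hfg
  · simp [e_ne]
  · simp [e_ne, h11]

/-- Flip amount at position `i`. -/
def w (hm : 5 ≤ m) (y : Fin m → ZMod 2) (i : ZMod k) : Fin m → ZMod 2 :=
  if i.val < m then (if y (f m k hm i) = 0 then 0 else e m (f m k hm i)) else 0

theorem sum_w (hm : 5 ≤ m) [NeZero k] (hk : m ≤ k) (y : Fin m → ZMod 2) :
    ∑ i : ZMod k, w m k hm y i = y := by
  ext j
  rw [Finset.sum_apply]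
  have hv : ((j.val : ℕ) : ZMod k).val = j.val := ZMod.val_cast_of_lt (by omega)
  have hfj : f m k hm ((j.val : ℕ) : ZMod k) = j := by
    unfold f
    rw [dif_pos (by rw [hv]; exact j.2)]
    ext; exact hv
  rw [Finset.sum_eq_single ((j.val : ℕ) : ZMod k)]
  · unfold w
    rw [hfj, hv, if_pos j.2]
    split_ifs with h
    · simp [h]
    · have h2 : ∀ z : ZMod 2, z ≠ 0 → z = 1 := by decide
      simp [e, h2 _ h]
  · intro b _ hb
    unfold w
    split_ifs with h1 h2
    · rfl
    · have : f m k hm b ≠ j := by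
        intro h
        apply hb
        rw [← h]
        unfold f
        rw [dif_pos h1]
        simp
      simp [e, Pi.single_apply, this.symm]
    · rfl
  · simp

theorem sum_range_w [NeZero k] (F : ZMod k → Fin m → ZMod 2) (i : ZMod k) :
    ∑ s ∈ Finset.range k, F (i + (s : ZMod k)) = ∑ z : ZMod k, F z := by
  rw [← Fintype.sum_equiv (Equiv.addLeft i) (fun p => F (i + p)) F (fun p => by simp)]
  refine Finset.sum_bij' (fun s _ => (s : ZMod k)) (fun z _ => z.val) ?_ ?_ ?_ ?_ ?_
  · simp
  · intro z _; simpa using ZMod.val_lt z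
  · intro s hs; exact ZMod.val_cast_of_lt (Finset.mem_range.mp hs)
  · simp
  · simp

theorem flip_inj (F : ZMod k → Fin m → ZMod 2) (t : ZMod k) :
    Function.Injective (fun v : W m k => ((v.1 + F v.2, v.2 + t) : W m k)) := by
  rintro ⟨x, i⟩ ⟨y, j⟩ h
  simp only [Prod.mk.injEq, add_left_inj] at h
  obtain ⟨h1, rfl⟩ := h
  simpa using h1

theorem N_le (hm : 5 ≤ m) (h18 : 18 ≤ k) [NeZero k] (hk : m ≤ k) (A C : Set (W m k))
    (hAC : ∀ a ∈ A, ∀ b, (G m k hm h18).Adj a b → b ∈ A ∨ b ∈ C) (p : W m k) :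
    (N A (fun a => a + p)).ncard ≤ 3 * k * C.ncard := by
  obtain ⟨y, j⟩ := p
  -- the shift
  have hσ : ∀ π : W m k → W m k, Function.Injective π →
      (N A (fun v => (((π v).1, (π v).2 + 1) : W m k))).ncard ≤ (N A π).ncard + C.ncard := by
    intro π hπ
    refine N_step A C (fun v => (v.1, v.2 + 1)) π ?_ hπ ?_
    · simpa using flip_inj m k (fun _ => 0) 1
    · intro a ha
      exact hAC a ha _ (Or.inl ⟨rfl, Or.inl rfl⟩)
  have hτ : ∀ π : W m k → W m k, Function.Injective π →
      (N A (fun v => (((π v).1 + w m k hm y (π v).2, (π v).2) : W m k))).ncard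
        ≤ (N A π).ncard + C.ncard := by
    intro π hπ
    refine N_step A C (fun v => (v.1 + w m k hm y v.2, v.2)) π ?_ hπ ?_
    · simpa using flip_inj m k (w m k hm y) 0
    · intro a ha
      by_cases h : w m k hm y a.2 = 0
      · left; rw [h]; simpa using ha
      · refine hAC a ha _ (Or.inr ⟨rfl, Or.inl ?_⟩)
        unfold w at h ⊢
        split_ifs at h ⊢ <;> simp_all
  have h1 : ∀ t : ℕ, (N A (fun v : W m k =>
      ((v.1 + ∑ s ∈ Finset.range t, w m k hm y (v.2 + (s : ZMod k)), v.2 + (t : ZMod k)) :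
        W m k))).ncard ≤ 2 * t * C.ncard := by
    intro t
    induction t with
    | zero => simp [N]
    | succ t ih =>
      have i1 := flip_inj m k
        (fun i => ∑ s ∈ Finset.range t, w m k hm y (i + (s : ZMod k))) (t : ZMod k)
      have i2 := flip_inj m k
        (fun i => ∑ s ∈ Finset.range (t + 1), w m k hm y (i + (s : ZMod k))) (t : ZMod k)
      have a1 := hτ _ i1
      have a2 := hσ _ i2
      simp only [Finset.sum_range_succ, add_assoc, Nat.cast_add, Nat.cast_one] at a1 a2 ih ⊢
      nlinarith
  have h2 : ∀ t : ℕ, (N A (fun v : W m k =>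
      ((v.1 + y, v.2 + (t : ZMod k)) : W m k))).ncard ≤ (2 * k + t) * C.ncard := by
    intro t
    induction t with
    | zero =>
      have := h1 k
      simp only [sum_range_w m k (w m k hm y), sum_w m k hm hk y, ZMod.natCast_self] at this
      simpa using this
    | succ t ih =>
      have a2 := hσ _ (flip_inj m k (fun _ => y) (t : ZMod k))
      simp only [add_assoc, Nat.cast_add, Nat.cast_one] at a2 ih ⊢
      nlinarith
  have h3 := h2 j.val
  rw [ZMod.natCast_zmod_val] at h3
  have h4 : j.val ≤ k := (ZMod.val_lt j).le
  calc _ ≤ _ := h3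
    _ ≤ _ := Nat.mul_le_mul_right _ (by omega)

end

end SepAux


/-- For every `m ≥ 5` and every `0 < c < 1/2` there is a
`4`-regular simple graph on `n = (6m − 12)·2^m` vertices such that every
separator `(A, B, C)` with separation constant `c` satisfies
`48(m−2)·|C| ≥ c·n`. -/
theorem exists_four_regular_graph_with_large_separators
    (m : ℕ) (hm : 5 ≤ m) (c : ℝ) (hc0 : 0 < c) (hc : c < 1 / 2) :
    ∃ (V : Type) (G : SimpleGraph V), Finite V ∧
      Nat.card V = (6 * m - 12) * 2 ^ m ∧
      (∀ v : V, Nat.card (G.neighborSet v) = 4) ∧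
      ∀ A B C : Set V,
        Disjoint A B → Disjoint A C → Disjoint B C → A ∪ B ∪ C = Set.univ →
        c * (((6 * m - 12) * 2 ^ m : ℕ) : ℝ) ≤ A.ncard → A.ncard ≤ B.ncard →
        (∀ a ∈ A, ∀ b ∈ B, ¬ G.Adj a b) →
        c * (((6 * m - 12) * 2 ^ m : ℕ) : ℝ) ≤ (48 * (m - 2) * C.ncard : ℕ) := by
  obtain ⟨k, hk⟩ : ∃ k, k = 6 * m - 12 := ⟨_, rfl⟩
  have h18 : 18 ≤ k := by omega
  have hmk : m ≤ k := by omega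
  haveI : NeZero k := ⟨by omega⟩
  have hcard : Nat.card (SepAux.W m k) = k * 2 ^ m := by
    simp [SepAux.W, Nat.card_prod, Nat.card_eq_fintype_card, ZMod.card, mul_comm]
  rw [← hk]
  refine ⟨SepAux.W m k, SepAux.G m k hm h18, inferInstance, hcard, SepAux.deg m k hm h18, ?_⟩
  intro A B C hAB hAC hBC hU hcA hle hno
  refine hcA.trans ?_
  have hAC' : ∀ a ∈ A, ∀ b, (SepAux.G m k hm h18).Adj a b → b ∈ A ∨ b ∈ C := by
    intro a ha b hab
    have hb : b ∈ A ∪ B ∪ C := hU ▸ Set.mem_univ b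
    rcases hb with (hb | hb) | hb
    · exact Or.inl hb
    · exact absurd hab (hno a ha b hb)
    · exact Or.inr hb
  have hsum := SepAux.sum_N A
  have hbd : ∑ p : SepAux.W m k, (SepAux.N A (fun a => a + p)).ncard
      ≤ k * 2 ^ m * (3 * k * C.ncard) := by
    refine (Finset.sum_le_card_nsmul _ _ _
      (fun p _ => SepAux.N_le m k hm h18 hmk A C hAC' p)).trans ?_
    rw [Finset.card_univ, ← Nat.card_eq_fintype_card, hcard, smul_eq_mul]
  rw [hsum] at hbd
  have hcompl : A.ncard + (Aᶜ).ncard = k * 2 ^ m := by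
    rw [Set.ncard_add_ncard_compl, hcard]
  have hBc : B.ncard ≤ (Aᶜ).ncard :=
    Set.ncard_le_ncard (fun b hb ha => Set.disjoint_left.mp hAB ha hb) (Set.toFinite _)
  have hpos : 0 < k * 2 ^ m := by positivity
  have key : A.ncard ≤ 6 * k * C.ncard := by
    have h1 : A.ncard * (k * 2 ^ m) ≤ (6 * k * C.ncard) * (k * 2 ^ m) := by
      have : A.ncard * (k * 2 ^ m) ≤ A.ncard * (2 * (Aᶜ).ncard) :=
        Nat.mul_le_mul_left _ (by omega)
      nlinarith
    exact Nat.le_of_mul_le_mul_right h1 hpos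
  have : A.ncard ≤ 48 * (m - 2) * C.ncard :=
    key.trans (Nat.mul_le_mul_right _ (by omega))
  exact_mod_cast this
end

section
/- For every integer m ≥ 6 and every real constant 0 < c < 1/3, there exists a 4-regular simple graph G on n = (6m − 12) · 2^m vertices such that: (i) every separator (A, B, C) of G with separation constant c satisfies 48(m − 2) · |C| ≥ c · n; and (ii) there exists a partition of the vertex set into pairwise disjoint sets A, B, C with no edge of G joining a vertex of A to a vertex of B, with |A| ≥ n/3, |B| ≥ n/3, and m · |C| ≤ n. -/
namespace SepCube

/-- The graph: a hypercube whose vertices are replaced by cycles with long diagonals. -/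
def gr {N m : ℕ} (h : ZMod N) (f : ZMod N → Fin m) (hh : h + h = 0) (h0 : h ≠ 0)
    (h1 : (1 : ZMod N) ≠ 0) : SimpleGraph ((Fin m → ZMod 2) × ZMod N) where
  Adj p q := (q.1 = p.1 ∧ (q.2 = p.2 + 1 ∨ q.2 = p.2 - 1 ∨ q.2 = p.2 + h)) ∨
    (q.2 = p.2 ∧ q.1 = p.1 + Pi.single (f p.2) 1)
  symm := ⟨by
    rintro ⟨w, i⟩ ⟨w2, i2⟩ H
    simp only at H ⊢
    rcases H with ⟨rfl, rfl | rfl | rfl⟩ | ⟨rfl, rfl⟩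
    · left; simp
    · left; simp
    · left; simp [add_assoc, hh]
    · right
      refine ⟨rfl, ?_⟩
      funext x
      simp only [Pi.add_apply]
      rw [add_assoc, CharTwo.add_self_eq_zero, add_zero]⟩
  loopless := ⟨by
    rintro ⟨w, i⟩ H
    simp only at H
    rcases H with ⟨-, H | H | H⟩ | ⟨-, H⟩
    · exact h1 (by simpa using H)
    · exact h1 (by simpa using (sub_eq_self.1 H.symm))
    · exact h0 (by simpa using H)
    · have := congrFun H (f i)
      simp at this⟩

lemma gr_deg {N m : ℕ} (h : ZMod N) (f : ZMod N → Fin m) (hh : h + h = 0) (h0 : h ≠ 0)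
    (h1 : (1 : ZMod N) ≠ 0) (h2 : (1 : ZMod N) ≠ -1) (h3 : h ≠ 1) (h4 : h ≠ -1)
    (v : (Fin m → ZMod 2) × ZMod N) :
    Nat.card ((gr h f hh h0 h1).neighborSet v) = 4 := by
  classical
  obtain ⟨w, i⟩ := v
  have : (gr h f hh h0 h1).neighborSet (w, i) =
      (({(w, i + 1), (w, i - 1), (w, i + h), (w + Pi.single (f i) 1, i)} :
        Finset ((Fin m → ZMod 2) × ZMod N)) : Set _) := by
    ext ⟨w2, i2⟩
    simp only [SimpleGraph.mem_neighborSet, gr, Finset.coe_insert, Finset.coe_singleton,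
      Set.mem_insert_iff, Set.mem_singleton_iff, Prod.mk.injEq]
    tauto
  rw [this, Nat.card_coe_set_eq, Set.ncard_coe_finset]
  have e1 : i + 1 ≠ i - 1 := by
    intro H; apply h2; rw [sub_eq_add_neg] at H; exact add_left_cancel H
  have e2 : i + 1 ≠ i + h := by
    intro H; exact h3 (add_left_cancel H).symm
  have e3 : i - 1 ≠ i + h := by
    intro H; rw [sub_eq_add_neg] at H; exact h4 (add_left_cancel H).symm
  rw [Finset.card_insert_of_notMem, Finset.card_insert_of_notMem, Finset.card_insert_of_notMem,
    Finset.card_singleton]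
  · simp [h0]
  · simp [e3, h1]
  · simp [e1, e2, h1]

/-- Partial translation words along the canonical path. -/
def pw {N m : ℕ} (g : Fin m → ZMod N) (s : Fin 3) (k : ZMod N) (D : Fin m → ZMod 2)
    (i : ZMod N) : Fin m → ZMod 2 := fun x =>
  if s = 0 then (if (g x - i).val < k.val then D x else 0)
  else if s = 1 then (if (g x - i).val ≤ k.val then D x else 0)
  else D x

lemma path_hits {N m : ℕ} [NeZero N] (h : ZMod N) (f : ZMod N → Fin m) (hh : h + h = 0)
    (h0 : h ≠ 0) (h1 : (1 : ZMod N) ≠ 0) (g : Fin m → ZMod N) (hfg : ∀ x, f (g x) = x)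
    (A B C : Set ((Fin m → ZMod 2) × ZMod N)) (hAB : Disjoint A B)
    (hU : A ∪ B ∪ C = Set.univ)
    (hE : ∀ a ∈ A, ∀ b ∈ B, ¬ (gr h f hh h0 h1).Adj a b)
    (w D : Fin m → ZMod 2) (i i2 : ZMod N) (ha : (w, i) ∈ A) (hb : (w + D, i2) ∈ B) :
    ∃ s k, (w + pw g s k D i, i + k) ∈ C := by
  by_contra! hn
  have step : ∀ p, p ∈ A → ∀ s k, (gr h f hh h0 h1).Adj p (w + pw g s k D i, i + k) →
      (w + pw g s k D i, i + k) ∈ A := by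
    intro p hp s k hadj
    have : (w + pw g s k D i, i + k) ∈ A ∪ B ∪ C := by rw [hU]; trivial
    rcases this with (h | h) | h
    · exact h
    · exact absurd hadj (hE _ hp _ h)
    · exact absurd h (hn s k)
  have hN : 0 < N := Nat.pos_of_ne_zero (NeZero.ne N)
  have s01 : ∀ k : ZMod N, (w + pw g 0 k D i, i + k) ∈ A → (w + pw g 1 k D i, i + k) ∈ A := by
    intro k hk
    by_cases hx : ∃ x, g x = i + k ∧ D x = 1
    · obtain ⟨x, hx, hD⟩ := hx
      apply step _ hk
      right
      refine ⟨rfl, ?_⟩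
      have hf : f (i + k) = x := by rw [← hx, hfg]
      simp only [hf]
      rw [add_assoc]
      congr 1
      funext y
      by_cases hy : y = x
      · subst hy
        simp [pw, hx, hD]
      · have : (g y - i).val ≠ k.val := by
          intro H
          have H2 := ZMod.val_injective N H
          apply hy
          rw [← hfg y, ← hfg x, hx, ← H2]
          congr 1; ring
        have e : (g y - i).val ≤ k.val ↔ (g y - i).val < k.val := by omega
        simp [pw, hy, e]
    · have : pw g 1 k D i = pw g 0 k D i := by
        funext y
        by_cases hy : (g y - i).val = k.val
        · have H2 := ZMod.val_injective N hy
          have hD : D y = 0 := by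
            have : D y ≠ 1 := fun hD => hx ⟨y, by rw [← H2]; ring, hD⟩
            revert this; generalize D y = z; revert z; decide
          simp [pw, hD]
        · have e : (g y - i).val ≤ k.val ↔ (g y - i).val < k.val := by omega
          simp [pw, e]
      rw [this]; exact hk
  have sweep : ∀ k : ℕ, k < N → (w + pw g 0 (k : ZMod N) D i, i + (k : ZMod N)) ∈ A := by
    intro k
    induction k with
    | zero =>
      intro _
      have : pw g 0 ((0 : ℕ) : ZMod N) D i = 0 := by funext y; simp [pw]
      rw [this]; simpa using ha
    | succ k ih =>
      intro hk
      have hA := s01 _ (ih (by omega))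
      apply step _ hA
      left
      refine ⟨?_, Or.inl ?_⟩
      · refine congrArg (w + ·) ?_
        funext y
        have v1 : ((k : ZMod N)).val = k := ZMod.val_natCast_of_lt (by omega)
        have v2 : (((k + 1 : ℕ) : ZMod N)).val = k + 1 := ZMod.val_natCast_of_lt hk
        simp only [pw, v1, v2, Nat.lt_succ_iff]
        simp
      · push_cast; ring
  have last : (w + D, i + ((N - 1 : ℕ) : ZMod N)) ∈ A := by
    have := s01 _ (sweep (N - 1) (by omega))
    have e : pw g 1 ((N - 1 : ℕ) : ZMod N) D i = D := by
      funext y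
      have v1 : (((N - 1 : ℕ) : ZMod N)).val = N - 1 := ZMod.val_natCast_of_lt (by omega)
      have := ZMod.val_lt (g y - i)
      have : (g y - i).val ≤ N - 1 := by omega
      simp [pw, v1, this]
    rwa [e] at this
  have p2 : ∀ k, pw g 2 k D i = D := by intro k; funext y; simp [pw]
  have fin : ∀ k : ℕ, (w + D, i + (k : ZMod N)) ∈ A := by
    intro k
    induction k with
    | zero =>
      have := step _ last 2 ((0 : ℕ) : ZMod N)
      rw [p2] at this
      apply this
      left
      refine ⟨rfl, Or.inl ?_⟩
      have : ((N - 1 : ℕ) : ZMod N) + 1 = 0 := by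
        rw [Nat.cast_sub hN]; simp
      simp [add_assoc, this]
    | succ k ih =>
      have := step _ ih 2 ((k + 1 : ℕ) : ZMod N)
      rw [p2] at this
      apply this
      left
      refine ⟨rfl, Or.inl ?_⟩
      push_cast; ring
  have := fin (i2 - i).val
  rw [ZMod.natCast_zmod_val] at this
  rw [add_sub_cancel] at this
  exact Set.disjoint_left.1 hAB this hb

lemma count {N m : ℕ} [NeZero N] (h : ZMod N) (f : ZMod N → Fin m) (hh : h + h = 0)
    (h0 : h ≠ 0) (h1 : (1 : ZMod N) ≠ 0) (g : Fin m → ZMod N) (hfg : ∀ x, f (g x) = x)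
    (A B C : Set ((Fin m → ZMod 2) × ZMod N)) (hAB : Disjoint A B)
    (hU : A ∪ B ∪ C = Set.univ)
    (hE : ∀ a ∈ A, ∀ b ∈ B, ¬ (gr h f hh h0 h1).Adj a b) :
    A.ncard * B.ncard ≤ 3 * N * C.ncard * (2 ^ m * N) := by
  let F : ((Fin 3 × ZMod N) × C) × ((Fin m → ZMod 2) × ZMod N) →
      ((Fin m → ZMod 2) × ZMod N) × ((Fin m → ZMod 2) × ZMod N) := fun q =>
    ((q.1.2.1.1 - pw g q.1.1.1 q.1.1.2 q.2.1 (q.1.2.1.2 - q.1.1.2), q.1.2.1.2 - q.1.1.2),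
     (q.1.2.1.1 - pw g q.1.1.1 q.1.1.2 q.2.1 (q.1.2.1.2 - q.1.1.2) + q.2.1, q.2.2))
  have hsub : A ×ˢ B ⊆ Set.image F Set.univ := by
    rintro ⟨⟨w, i⟩, ⟨w2, i2⟩⟩ ⟨ha, hb⟩
    obtain ⟨s, k, hc⟩ := path_hits h f hh h0 h1 g hfg A B C hAB hU hE w (w2 - w) i i2 ha
      (by simpa using hb)
    refine ⟨(((s, k), ⟨_, hc⟩), (w2 - w, i2)), trivial, ?_⟩
    simp [F]
  have h3 := Set.ncard_le_ncard hsub (Set.toFinite _)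
  rw [Set.ncard_prod] at h3
  refine h3.trans ((Set.ncard_image_le (Set.toFinite _)).trans ?_)
  rw [Set.ncard_univ]
  simp [Nat.card_prod, Nat.card_coe_set_eq]

end SepCube

open SepCube

/-- For every `m ≥ 6` and every `0 < c < 1/3` there is a
`4`-regular simple graph on `n = (6m − 12)·2^m` vertices such that
(i) every separator `(A, B, C)` with separation constant `c` satisfies
`48(m−2)·|C| ≥ c·n`, and (ii) there is a partition `(A, B, C)` of the vertex
set with no edge joining `A` to `B`, with `|A| ≥ n/3`, `|B| ≥ n/3` and
`m·|C| ≤ n`. -/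
theorem exists_four_regular_graph_separator_bounds
    (m : ℕ) (hm : 6 ≤ m) (c : ℝ) (hc0 : 0 < c) (hc : c < 1 / 3) :
    ∃ (V : Type) (G : SimpleGraph V), Finite V ∧
      Nat.card V = (6 * m - 12) * 2 ^ m ∧
      (∀ v : V, Nat.card (G.neighborSet v) = 4) ∧
      (∀ A B C : Set V,
        Disjoint A B → Disjoint A C → Disjoint B C → A ∪ B ∪ C = Set.univ →
        c * (((6 * m - 12) * 2 ^ m : ℕ) : ℝ) ≤ A.ncard → A.ncard ≤ B.ncard →
        (∀ a ∈ A, ∀ b ∈ B, ¬ G.Adj a b) →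
        c * (((6 * m - 12) * 2 ^ m : ℕ) : ℝ) ≤ (48 * (m - 2) * C.ncard : ℕ)) ∧
      (∃ A B C : Set V,
        Disjoint A B ∧ Disjoint A C ∧ Disjoint B C ∧ A ∪ B ∪ C = Set.univ ∧
        (∀ a ∈ A, ∀ b ∈ B, ¬ G.Adj a b) ∧
        (((6 * m - 12) * 2 ^ m : ℕ) : ℝ) / 3 ≤ A.ncard ∧
        (((6 * m - 12) * 2 ^ m : ℕ) : ℝ) / 3 ≤ B.ncard ∧
        m * C.ncard ≤ (6 * m - 12) * 2 ^ m) := by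
  classical
  obtain ⟨r, rfl⟩ : ∃ r, m = r + 2 := ⟨m - 2, by omega⟩
  have hr : 4 ≤ r := by omega
  have hNr : 6 * (r + 2) - 12 = 6 * r := by omega
  rw [hNr]
  have hm2 : r + 2 - 2 = r := by omega
  have : NeZero (6 * r) := ⟨by omega⟩
  set N := 6 * r with hN
  have key : ∀ a b : ℕ, a < N → b < N → a ≠ b → (a : ZMod N) ≠ (b : ZMod N) := by
    intro a b ha hb hab H
    apply hab
    rw [← ZMod.val_natCast_of_lt ha, ← ZMod.val_natCast_of_lt hb, H]
  have hneg : (-1 : ZMod N) = ((N - 1 : ℕ) : ZMod N) := by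
    rw [Nat.cast_sub (by omega)]; simp
  let h : ZMod N := ((3 * r : ℕ) : ZMod N)
  have hh : h + h = 0 := by
    simp only [h]
    rw [← Nat.cast_add, show 3 * r + 3 * r = N by omega]; simp
  have h0 : h ≠ 0 := by
    simpa [h] using key (3 * r) 0 (by omega) (by omega) (by omega)
  have h1 : (1 : ZMod N) ≠ 0 := by
    simpa using key 1 0 (by omega) (by omega) (by omega)
  have h2 : (1 : ZMod N) ≠ -1 := by
    rw [hneg]
    simpa using key 1 (N - 1) (by omega) (by omega) (by omega)
  have h3 : h ≠ 1 := by
    simpa [h] using key (3 * r) 1 (by omega) (by omega) (by omega)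
  have h4 : h ≠ -1 := by
    rw [hneg]
    exact key (3 * r) (N - 1) (by omega) (by omega) (by omega)
  let f : ZMod N → Fin (r + 2) := fun j =>
    if hj : j.val < r + 2 then ⟨j.val, hj⟩ else ⟨r + 1, by omega⟩
  let g : Fin (r + 2) → ZMod N := fun x => ((x : ℕ) : ZMod N)
  have hfg : ∀ x, f (g x) = x := by
    intro x
    have : ((x : ℕ) : ZMod N).val = x := ZMod.val_natCast_of_lt (by omega)
    simp [f, g, this]
  have hf0 : ∀ j, f j = 0 → j = 0 := by
    intro j hj
    simp only [f] at hj
    split_ifs at hj with hlt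
    · rw [Fin.ext_iff] at hj
      exact (ZMod.val_eq_zero j).1 hj
    · rw [Fin.ext_iff] at hj
      simp at hj
  have hcard : Nat.card ((Fin (r + 2) → ZMod 2) × ZMod N) = N * 2 ^ (r + 2) := by
    simp [Nat.card_prod, mul_comm]
  refine ⟨(Fin (r + 2) → ZMod 2) × ZMod N, gr h f hh h0 h1, inferInstance, hcard,
    gr_deg h f hh h0 h1 h2 h3 h4, ?_, ?_⟩
  · intro A B C hAB hAC hBC hU hcA hle hE
    have hcnt := count h f hh h0 h1 g hfg A B C hAB hU hE
    have hsum : A.ncard + B.ncard + C.ncard = N * 2 ^ (r + 2) := by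
      rw [← hcard, ← Set.ncard_univ, ← hU, Set.ncard_union_eq, Set.ncard_union_eq hAB]
      exact Set.disjoint_union_left.2 ⟨hAC, hBC⟩
    rw [hm2]
    generalize A.ncard = a at *
    generalize B.ncard = b at *
    generalize C.ncard = k at *
    have hnpos : 0 < N * 2 ^ (r + 2) := by positivity
    rw [show 2 ^ (r + 2) * N = N * 2 ^ (r + 2) by ring] at hcnt
    generalize N * 2 ^ (r + 2) = n at *
    have hc1 : (a : ℝ) * b ≤ 3 * N * k * n := by exact_mod_cast hcnt
    have hs1 : (a : ℝ) + b + k = n := by exact_mod_cast hsum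
    have hle1 : (a : ℝ) ≤ b := by exact_mod_cast hle
    have hn1 : (0 : ℝ) < n := by exact_mod_cast hnpos
    have hNr1 : (N : ℝ) = 6 * r := by rw [hN]; push_cast; ring
    have hr1 : (4 : ℝ) ≤ r := by exact_mod_cast hr
    have hk0 : (0 : ℝ) ≤ k := by positivity
    have hb0 : (0 : ℝ) ≤ b := by positivity
    push_cast
    have e1 : c * n * b ≤ 3 * N * k * n := (mul_le_mul_of_nonneg_right hcA hb0).trans hc1
    have e2 : c * b ≤ 18 * r * k := by
      rw [hNr1] at e1
      have : n * (c * b) ≤ n * (18 * r * k) := by linarith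
      exact le_of_mul_le_mul_left this hn1
    have e3 : c * n ≤ c * (2 * b + k) := mul_le_mul_of_nonneg_left (by linarith) hc0.le
    have e4 : c * k ≤ 1 * k := mul_le_mul_of_nonneg_right (by linarith) hk0
    have e5 : (4 : ℝ) * k ≤ r * k := mul_le_mul_of_nonneg_right hr1 hk0
    linarith
  · let A : Set ((Fin (r + 2) → ZMod 2) × ZMod N) := {p | p.1 0 = 0 ∧ p.2 ≠ 0}
    let B : Set ((Fin (r + 2) → ZMod 2) × ZMod N) := {p | p.1 0 ≠ 0}
    let C : Set ((Fin (r + 2) → ZMod 2) × ZMod N) := {p | p.1 0 = 0 ∧ p.2 = 0}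
    have hAB : Disjoint A B := Set.disjoint_left.2 fun p hp hq => hq hp.1
    have hAC : Disjoint A C := Set.disjoint_left.2 fun p hp hq => hp.2 hq.2
    have hBC : Disjoint B C := Set.disjoint_left.2 fun p hp hq => hp hq.1
    have hU : A ∪ B ∪ C = Set.univ := by
      ext p
      simp only [A, B, C, Set.mem_union, Set.mem_ofPred_eq, Set.mem_univ, iff_true]
      tauto
    have hsum : A.ncard + B.ncard + C.ncard = N * 2 ^ (r + 2) := by
      rw [← hcard, ← Set.ncard_univ, ← hU, Set.ncard_union_eq, Set.ncard_union_eq hAB]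
      exact Set.disjoint_union_left.2 ⟨hAC, hBC⟩
    have hC : C.ncard ≤ 2 ^ (r + 2) := by
      have : C ⊆ Set.image (fun w => (w, (0 : ZMod N))) (Set.univ : Set (Fin (r + 2) → ZMod 2)) := by
        rintro ⟨w, i⟩ ⟨-, hi⟩
        exact ⟨w, trivial, by simp only at hi; rw [hi]⟩
      refine (Set.ncard_le_ncard this (Set.toFinite _)).trans
        ((Set.ncard_image_le (Set.toFinite _)).trans ?_)
      rw [Set.ncard_univ]; simp
    have hBeq : B.ncard = A.ncard + C.ncard := by
      rw [← Set.ncard_union_eq hAC]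
      let φ : (Fin (r + 2) → ZMod 2) × ZMod N → (Fin (r + 2) → ZMod 2) × ZMod N :=
        fun p => (p.1 + Pi.single 0 1, p.2)
      have hφ : Function.Injective φ := by
        rintro ⟨w, i⟩ ⟨w2, i2⟩ H
        simpa [φ] using H
      rw [← Set.ncard_image_of_injective (A ∪ C) hφ]
      congr 1
      ext ⟨w, i⟩
      constructor
      · intro hw
        refine ⟨(w + Pi.single 0 1, i), ?_, ?_⟩
        · have : w 0 + 1 = 0 := by
            have hw : w 0 ≠ 0 := hw
            revert hw; generalize w 0 = z; revert z; decide
          simp only [A, C, Set.mem_union, Set.mem_ofPred_eq, Pi.add_apply, Pi.single_eq_same, this]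
          tauto
        · simp [φ, add_assoc, CharTwo.add_self_eq_zero]
      · rintro ⟨⟨u, j⟩, hu, he⟩
        have hu0 : u 0 = 0 := by rcases hu with hu | hu <;> exact hu.1
        simp only [φ, Prod.mk.injEq] at he
        simp [B, ← he.1, hu0]
    refine ⟨A, B, C, hAB, hAC, hBC, hU, ?_, ?_, ?_, ?_⟩
    · rintro ⟨w, i⟩ ⟨hw, hi⟩ ⟨w2, i2⟩ hb hadj
      simp only [B, Set.mem_ofPred_eq] at hw hi hb
      rcases hadj with ⟨e, -⟩ | ⟨-, e⟩
      · simp only at e; rw [e] at hb; exact hb hw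
      · simp only at e
        apply hi
        apply hf0
        by_contra hne
        apply hb
        rw [e]
        simp [hw, Pi.single_apply, Ne.symm hne]
    · have : N * 2 ^ (r + 2) ≤ 3 * A.ncard := by
        have : 24 * 2 ^ (r + 2) ≤ N * 2 ^ (r + 2) := Nat.mul_le_mul_right _ (by omega)
        omega
      rw [div_le_iff₀ (by norm_num)]
      rw [mul_comm 3] at this
      exact_mod_cast this
    · have : N * 2 ^ (r + 2) ≤ 3 * B.ncard := by omega
      rw [div_le_iff₀ (by norm_num)]
      rw [mul_comm 3] at this
      exact_mod_cast this
    · exact Nat.mul_le_mul (by omega) hC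
end

section
/- For every integer m ≥ 3, the edge expansion of the cube-connected cycles graph CCC_m on n = m · 2^m vertices is at least 1/(8m); that is, every nonempty set S of vertices of CCC_m with 2|S| ≤ n satisfies 8m · |δ(S)| ≥ |S|. -/
/-- The cube-connected cycles graph `CCC_m`: vertex set `{0,1}^m × ℤ/mℤ`, with
`(v, i)` adjacent to `(v, i+1)`, to `(v, i−1)`, and to `(v + e_i, i)`, where
`e_i` is the `i`-th standard basis vector (coordinates mod `2`, second
component mod `m`). -/
def CCC (m : ℕ) : SimpleGraph ((ZMod m → ZMod 2) × ZMod m) :=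
  SimpleGraph.fromRel (fun x y =>
    (x.1 = y.1 ∧ y.2 = x.2 + 1) ∨ (x.2 = y.2 ∧ y.1 = x.1 + Pi.single x.2 1))

open Classical in
/-- `0/1` cut pseudo-metric. -/
noncomputable def cutD {V : Type*} (S : Set V) (x y : V) : ℕ :=
  if (x ∈ S ↔ y ∈ S) then 0 else 1

theorem cutD_self {V : Type*} (S : Set V) (x : V) : cutD S x x = 0 := by simp [cutD]

theorem cutD_tri {V : Type*} (S : Set V) (x y z : V) :
    cutD S x z ≤ cutD S x y + cutD S y z := by
  unfold cutD
  by_cases hx : x ∈ S <;> by_cases hy : y ∈ S <;> by_cases hz : z ∈ S <;> simp [hx, hy, hz]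

theorem cutD_path {V : Type*} (S : Set V) (P : ℕ → V) (n : ℕ) :
    cutD S (P 0) (P n) ≤ ∑ k ∈ Finset.range n, cutD S (P k) (P (k + 1)) := by
  induction n with
  | zero => simp [cutD_self]
  | succ n ih =>
    rw [Finset.sum_range_succ]
    exact (cutD_tri S _ (P n) _).trans (by omega)

theorem cutD_sum_step {V : Type*} [Fintype V] (G : SimpleGraph V) (S : Set V) (φ : V → V)
    (h : ∀ x, x ≠ φ x → G.Adj x (φ x)) :
    ∑ x, cutD S x (φ x) ≤ 2 * (edgeBoundary G S).ncard := by
  classical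
  have e : ∑ x, cutD S x (φ x) =
      (Finset.univ.filter (fun x => x ∈ S ∧ φ x ∉ S)).card +
      (Finset.univ.filter (fun x => x ∉ S ∧ φ x ∈ S)).card := by
    rw [Finset.card_filter, Finset.card_filter, ← Finset.sum_add_distrib]
    refine Finset.sum_congr rfl fun x _ => ?_
    unfold cutD
    by_cases hx : x ∈ S <;> by_cases hy : φ x ∈ S <;> simp [hx, hy]
  have h1 : (Finset.univ.filter (fun x => x ∈ S ∧ φ x ∉ S)).card ≤ (edgeBoundary G S).ncard := by
    rw [← Set.ncard_coe_finset]
    refine Set.ncard_le_ncard_of_injOn (fun x => s(x, φ x)) ?_ ?_ (Set.toFinite _)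
    · intro x hx
      simp only [Finset.coe_filter, Finset.mem_univ, true_and, Set.mem_ofPred_eq] at hx
      refine ⟨h x ?_, x, hx.1, φ x, hx.2, rfl⟩
      intro he; rw [← he] at hx; exact hx.2 hx.1
    · intro x hx y hy hxy
      simp only [Finset.coe_filter, Finset.mem_univ, true_and, Set.mem_ofPred_eq] at hx hy
      rcases Sym2.eq_iff.1 hxy with h | h
      · exact h.1
      · exact absurd (h.1 ▸ hx.1) hy.2
  have h2 : (Finset.univ.filter (fun x => x ∉ S ∧ φ x ∈ S)).card ≤ (edgeBoundary G S).ncard := by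
    rw [← Set.ncard_coe_finset]
    refine Set.ncard_le_ncard_of_injOn (fun x => s(x, φ x)) ?_ ?_ (Set.toFinite _)
    · intro x hx
      simp only [Finset.coe_filter, Finset.mem_univ, true_and, Set.mem_ofPred_eq] at hx
      refine ⟨h x ?_, φ x, hx.2, x, hx.1, Sym2.eq_swap⟩
      intro he; rw [← he] at hx; exact hx.1 hx.2
    · intro x hx y hy hxy
      simp only [Finset.coe_filter, Finset.mem_univ, true_and, Set.mem_ofPred_eq] at hx hy
      rcases Sym2.eq_iff.1 hxy with h | h
      · exact h.1
      · exact absurd (h.1 ▸ hy.2) hx.1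
  omega

theorem cutD_sum_all {V : Type*} [Fintype V] (S : Set V) :
    2 * (S.ncard * Sᶜ.ncard) ≤ ∑ x, ∑ y, cutD S x y := by
  classical
  have h1 : S.ncard = ∑ x : V, if x ∈ S then 1 else 0 := by
    rw [Set.ncard_eq_toFinset_card', ← Finset.card_filter]; congr 1; ext; simp
  have h2 : Sᶜ.ncard = ∑ x : V, if x ∈ S then 0 else 1 := by
    rw [Set.ncard_eq_toFinset_card']
    rw [Finset.sum_congr rfl (g := fun x => if x ∉ S then 1 else 0) (by intro x _; simp)]
    rw [← Finset.card_filter]; congr 1; ext; simp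
  rw [two_mul]
  nth_rewrite 2 [mul_comm]
  rw [h1, h2, Finset.sum_mul_sum, Finset.sum_mul_sum]
  simp only [← Finset.sum_add_distrib]
  refine Finset.sum_le_sum fun x _ => Finset.sum_le_sum fun y _ => ?_
  unfold cutD
  by_cases hx : x ∈ S <;> by_cases hy : y ∈ S <;> simp [hx, hy]

/-- the hybrid word: the first `k` coordinates after `i` come from `w`, the others from `v`. -/
def hyb {m : ℕ} (k : ℕ) (i : ZMod m) (v w : ZMod m → ZMod 2) : ZMod m → ZMod 2 :=
  fun p => if (p - i).val < k then w p else v p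

theorem hyb_zero {m : ℕ} (i : ZMod m) (v w : ZMod m → ZMod 2) : hyb 0 i v w = v := by
  funext p; simp [hyb]

theorem hyb_full {m : ℕ} [NeZero m] (i : ZMod m) (v w : ZMod m → ZMod 2) : hyb m i v w = w := by
  funext p; simp [hyb, ZMod.val_lt]

theorem hyb_sum {m : ℕ} [NeZero m] (k : ℕ) (i : ZMod m) (F : (ZMod m → ZMod 2) → ℕ) :
    ∑ v, ∑ w, F (hyb k i v w) = 2 ^ m * ∑ v, F v := by
  have hinv : Function.Involutive
      (fun q : (ZMod m → ZMod 2) × (ZMod m → ZMod 2) => (hyb k i q.1 q.2, hyb k i q.2 q.1)) := by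
    rintro ⟨v, w⟩
    ext p <;> simp only [hyb] <;> split_ifs <;> rfl
  have := Fintype.sum_equiv hinv.toPerm (fun q => F (hyb k i q.1 q.2)) (fun q => F q.1)
    (fun q => rfl)
  rw [Fintype.sum_prod_type, Fintype.sum_prod_type] at this
  rw [this]
  simp [Finset.mul_sum, ZMod.card]

theorem hyb_succ {m : ℕ} [NeZero m] (k : ℕ) (hk : k < m) (i : ZMod m)
    (v w : ZMod m → ZMod 2) :
    hyb (k + 1) i v w = hyb k i v w ∨
    hyb (k + 1) i v w = hyb k i v w + Pi.single (i + (k : ZMod m)) 1 := by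
  have hval : ((k : ℕ) : ZMod m).val = k := ZMod.val_cast_of_lt hk
  have key : ∀ p : ZMod m, p ≠ i + k → (p - i).val ≠ k := by
    intro p hp h
    apply hp
    have : ((p - i).val : ZMod m) = k := by rw [h]
    rw [ZMod.natCast_zmod_val] at this
    rw [← this]; ring
  have h2 : ∀ a b : ZMod 2, a = b ∨ a = b + 1 := by decide
  rcases h2 (w (i + k)) (v (i + k)) with h | h
  · left
    funext p
    by_cases hp : p = i + k
    · subst hp; simp [hyb, hval, h]
    · have := key p hp
      have e : (p - i).val < k + 1 ↔ (p - i).val < k := by omega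
      simp [hyb, e]
  · right
    funext p
    by_cases hp : p = i + k
    · subst hp; simp [hyb, hval, h]
    · have := key p hp
      have e : (p - i).val < k + 1 ↔ (p - i).val < k := by omega
      simp [hyb, e, hp]

theorem ccc_phase1 {m : ℕ} [NeZero m] (S : Set ((ZMod m → ZMod 2) × ZMod m)) :
    ∑ i : ZMod m, ∑ v, ∑ w, cutD S (v, i) (w, i) ≤
      m * 2 ^ m * ((∑ x : (ZMod m → ZMod 2) × ZMod m, cutD S x (x.1 + Pi.single x.2 1, x.2)) +
        ∑ x : (ZMod m → ZMod 2) × ZMod m, cutD S x (x.1, x.2 + 1)) := by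
  set b : (ZMod m → ZMod 2) × ZMod m → ℕ :=
    fun x => cutD S x (x.1 + Pi.single x.2 1, x.2) with hb
  set a : (ZMod m → ZMod 2) × ZMod m → ℕ := fun x => cutD S x (x.1, x.2 + 1) with ha
  have step : ∀ (i : ZMod m) (v w : ZMod m → ZMod 2), cutD S (v, i) (w, i) ≤
      ∑ k ∈ Finset.range m, (b (hyb k i v w, i + k) + a (hyb (k + 1) i v w, i + k)) := by
    intro i v w
    have h := cutD_path S (fun k => (hyb k i v w, i + (k : ZMod m))) m
    simp only [hyb_zero, hyb_full, Nat.cast_zero, add_zero, ZMod.natCast_self] at h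
    refine h.trans (Finset.sum_le_sum fun k hk => ?_)
    refine (cutD_tri S _ (hyb (k + 1) i v w, i + (k : ZMod m)) _).trans (Nat.add_le_add ?_ ?_)
    · rcases hyb_succ k (Finset.mem_range.1 hk) i v w with h | h <;> rw [h]
      · simp [cutD_self]
    · simp only [ha, Nat.cast_add, Nat.cast_one, add_assoc]; exact le_rfl
  have shift : ∀ (F : (ZMod m → ZMod 2) × ZMod m → ℕ) (k : ℕ),
      ∑ i : ZMod m, ∑ v, F (v, i + (k : ZMod m)) = ∑ x, F x := by
    intro F k
    rw [Fintype.sum_prod_type_right]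
    exact Fintype.sum_equiv (Equiv.addRight (k : ZMod m)) _ _ (fun i => rfl)
  calc _ ≤ ∑ i : ZMod m, ∑ v, ∑ w, ∑ k ∈ Finset.range m,
        (b (hyb k i v w, i + k) + a (hyb (k + 1) i v w, i + k)) :=
        Finset.sum_le_sum fun i _ => Finset.sum_le_sum fun v _ => Finset.sum_le_sum fun w _ =>
          step i v w
    _ = ∑ k ∈ Finset.range m, ∑ i : ZMod m, ((∑ v, ∑ w, b (hyb k i v w, i + k)) +
          ∑ v, ∑ w, a (hyb (k + 1) i v w, i + k)) := by
        rw [Finset.sum_comm (s := Finset.range m)]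
        refine Finset.sum_congr rfl fun i _ => ?_
        simp only [← Finset.sum_add_distrib]
        rw [Finset.sum_comm (s := Finset.range m)]
        refine Finset.sum_congr rfl fun v _ => ?_
        rw [Finset.sum_comm (s := Finset.range m)]
    _ = ∑ k ∈ Finset.range m, (2 ^ m * ∑ x, b x + 2 ^ m * ∑ x, a x) := by
        refine Finset.sum_congr rfl fun k _ => ?_
        rw [← shift b k, ← shift a k, Finset.mul_sum, Finset.mul_sum, ← Finset.sum_add_distrib]
        refine Finset.sum_congr rfl fun i _ => ?_
        rw [hyb_sum k i (fun u => b (u, i + k)), hyb_sum (k + 1) i (fun u => a (u, i + k))]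
    _ = _ := by
        rw [Finset.sum_const, Finset.card_range, smul_eq_mul]; ring

theorem ccc_phase2 {m : ℕ} [NeZero m] (S : Set ((ZMod m → ZMod 2) × ZMod m)) :
    ∑ w : ZMod m → ZMod 2, ∑ i : ZMod m, ∑ j : ZMod m, cutD S (w, i) (w, j) ≤
      m * m * ∑ x : (ZMod m → ZMod 2) × ZMod m, cutD S x (x.1, x.2 + 1) := by
  rw [Fintype.sum_prod_type, Finset.mul_sum]
  refine Finset.sum_le_sum fun w _ => ?_
  have step : ∀ i j : ZMod m, cutD S (w, i) (w, j) ≤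
      ∑ k ∈ Finset.range m, cutD S (w, i + (k : ZMod m)) (w, i + (k : ZMod m) + 1) := by
    intro i j
    have h := cutD_path S (fun k => (w, i + (k : ZMod m))) (j - i).val
    simp only [Nat.cast_zero, add_zero, ZMod.natCast_zmod_val, add_sub_cancel, Nat.cast_add,
      Nat.cast_one, ← add_assoc] at h
    refine h.trans (Finset.sum_le_sum_of_subset ?_)
    exact Finset.range_subset_range.2 (ZMod.val_lt _).le
  calc _ ≤ ∑ i : ZMod m, ∑ j : ZMod m,
      ∑ k ∈ Finset.range m, cutD S (w, i + (k : ZMod m)) (w, i + (k : ZMod m) + 1) :=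
        Finset.sum_le_sum fun i _ => Finset.sum_le_sum fun j _ => step i j
    _ = m * ∑ k ∈ Finset.range m, ∑ i : ZMod m,
        cutD S (w, i + (k : ZMod m)) (w, i + (k : ZMod m) + 1) := by
        simp only [Finset.sum_const, Finset.card_univ, ZMod.card, smul_eq_mul]
        rw [← Finset.mul_sum, Finset.sum_comm]
    _ = m * ∑ k ∈ Finset.range m, ∑ i : ZMod m, cutD S (w, i) (w, i + 1) := by
        congr 1
        refine Finset.sum_congr rfl fun k _ => ?_
        exact Fintype.sum_equiv (Equiv.addRight (k : ZMod m)) _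
          (fun i => cutD S (w, i) (w, i + 1)) (fun i => rfl)
    _ = _ := by
        rw [Finset.sum_const, Finset.card_range, smul_eq_mul, mul_assoc]

/-- For `m ≥ 3`, the edge expansion of `CCC_m` on `n = m·2^m`
vertices is at least `1/(8m)`: every nonempty vertex set `S` with `2|S| ≤ n`
satisfies `8m·|δ(S)| ≥ |S|`. -/
theorem ccc_expansion (m : ℕ) (hm : 3 ≤ m) :
    ∀ S : Set ((ZMod m → ZMod 2) × ZMod m), S.Nonempty →
      2 * S.ncard ≤ m * 2 ^ m →
      S.ncard ≤ 8 * m * (edgeBoundary (CCC m) S).ncard := by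
  intro S _ hS
  have : NeZero m := ⟨by omega⟩
  have hA := cutD_sum_step (CCC m) S (fun x => (x.1, x.2 + 1)) (by
    intro x hx
    exact (SimpleGraph.fromRel_adj _ _ _).2 ⟨hx, Or.inl (Or.inl ⟨rfl, rfl⟩)⟩)
  have hB := cutD_sum_step (CCC m) S (fun x => (x.1 + Pi.single x.2 1, x.2)) (by
    intro x hx
    exact (SimpleGraph.fromRel_adj _ _ _).2 ⟨hx, Or.inl (Or.inr ⟨rfl, rfl⟩)⟩)
  have h1 := ccc_phase1 S
  have h2 := ccc_phase2 S
  have h0 := cutD_sum_all S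
  have hc : S.ncard + Sᶜ.ncard = m * 2 ^ m := by
    rw [Set.ncard_add_ncard_compl]
    simp [Nat.card_eq_fintype_card, ZMod.card, mul_comm]
  set d := (edgeBoundary (CCC m) S).ncard
  set A := ∑ x : (ZMod m → ZMod 2) × ZMod m, cutD S x (x.1, x.2 + 1)
  set B := ∑ x : (ZMod m → ZMod 2) × ZMod m, cutD S x (x.1 + Pi.single x.2 1, x.2)
  have hsplit : ∑ x, ∑ y, cutD S x y ≤
      m * (∑ i : ZMod m, ∑ v, ∑ w, cutD S (v, i) (w, i)) +
      2 ^ m * ∑ w : ZMod m → ZMod 2, ∑ i : ZMod m, ∑ j : ZMod m, cutD S (w, i) (w, j) := by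
    calc ∑ x, ∑ y, cutD S x y = ∑ i : ZMod m, ∑ v : ZMod m → ZMod 2, ∑ w : ZMod m → ZMod 2,
          ∑ j : ZMod m, cutD S (v, i) (w, j) := by
          rw [Fintype.sum_prod_type_right]
          simp only [Fintype.sum_prod_type]
      _ ≤ ∑ i : ZMod m, ∑ v : ZMod m → ZMod 2, ∑ w : ZMod m → ZMod 2,
          ∑ j : ZMod m, (cutD S (v, i) (w, i) + cutD S (w, i) (w, j)) := by
          gcongr
          exact cutD_tri _ _ _ _
      _ = _ := by
          simp only [Finset.sum_add_distrib, Finset.sum_const, Finset.card_univ, ZMod.card,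
            smul_eq_mul, Fintype.card_fun, ← Finset.mul_sum]
          congr 2
          exact Finset.sum_comm
  have hfin : 2 * (S.ncard * Sᶜ.ncard) ≤ m * (m * 2 ^ m * (B + A)) + 2 ^ m * (m * m * A) :=
    h0.trans (hsplit.trans (by gcongr))
  have hM : 0 < m * 2 ^ m := by positivity
  have h3 : m * (m * 2 ^ m * (B + A)) + 2 ^ m * (m * m * A) ≤ (m * 2 ^ m) * (6 * m * d) := by
    calc _ = (m * 2 ^ m) * (m * (B + 2 * A)) := by ring
      _ ≤ (m * 2 ^ m) * (m * (6 * d)) := by gcongr; omega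
      _ = _ := by ring
  have h4 : (m * 2 ^ m) * S.ncard ≤ (m * 2 ^ m) * (6 * m * d) := by
    refine le_trans ?_ (hfin.trans h3)
    calc (m * 2 ^ m) * S.ncard ≤ (2 * Sᶜ.ncard) * S.ncard :=
          Nat.mul_le_mul_right _ (by omega)
      _ = _ := by ring
  have h5 := Nat.le_of_mul_le_mul_left h4 hM
  refine h5.trans ?_
  gcongr
  omega
end
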